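/- The itinerary of an irrational real number under f_Γ contains neither of the three-letter blocks 202 and 404: for every irrational x and every n ∈ ℕ, if I(x)(n) = 2 and I(x)(n+1) = 0 then I(x)(n+2) = 4, and if I(x)(n) = 4 and I(x)(n+1) = 0 then I(x)(n+2) = 2. -/

import Mathlib

noncomputable def fGamma (x : ℝ) : ℝ :=
  if x ≤ -1 then x + 1
  else if x < 1 then -1 / x
  else x - 1

noncomputable def symb (x : ℝ) : ℕ :=
  if x < -1 then 2 else if x < 1 then 0 else 4

noncomputable def itin (x : ℝ) : ℕ → ℕ :=
  fun n => symb (fGamma^[n] x)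

/-!
From `y < -1` the map moves right by `1`, so if it lands in the middle interval it lands in
`[-1, 0)`; from `y ≥ 1` it moves left by `1` and then lands in `[0, 1)`. The next step
`z ↦ -1 / z` sends `(-1, 0)` beyond `1` and `(0, 1)` below `-1`. In these two cases the endpoints
`-1` and `0` come only from `y = -2` and `y = 1`, which an irrational orbit avoids.
-/

lemma symb_eq_two_iff {x : ℝ} : symb x = 2 ↔ x < -1 := by
  unfold symb
  split_ifs <;> simp_all

lemma symb_eq_zero_iff {x : ℝ} : symb x = 0 ↔ x ∈ Set.Ico (-1) 1 := by
  unfold symb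
  split_ifs <;> simp_all

lemma symb_eq_four_iff {x : ℝ} : symb x = 4 ↔ 1 ≤ x := by
  unfold symb
  split_ifs <;> grind

lemma fGamma_of_le_neg_one {x : ℝ} (hx : x ≤ -1) : fGamma x = x + 1 :=
  if_pos hx

lemma fGamma_of_mem_Ioo {x : ℝ} (hx : x ∈ Set.Ioo (-1) 1) : fGamma x = -1 / x := by
  rw [fGamma, if_neg hx.1.not_ge, if_pos hx.2]

lemma fGamma_of_one_le {x : ℝ} (hx : 1 ≤ x) : fGamma x = x - 1 := by
  rw [fGamma, if_neg (by linarith), if_neg hx.not_gt]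

lemma one_lt_fGamma {x : ℝ} (hx : x ∈ Set.Ioo (-1) 0) : 1 < fGamma x := by
  rw [fGamma_of_mem_Ioo ⟨hx.1, hx.2.trans one_pos⟩, lt_div_iff_of_neg hx.2, one_mul]
  exact hx.1

lemma fGamma_lt_neg_one {x : ℝ} (hx : x ∈ Set.Ioo 0 1) : fGamma x < -1 := by
  rw [fGamma_of_mem_Ioo ⟨neg_one_lt_zero.trans hx.1, hx.2⟩, div_lt_iff₀ hx.1, neg_one_mul]
  exact neg_lt_neg hx.2

lemma irrational_fGamma {x : ℝ} (hx : Irrational x) : Irrational (fGamma x) := by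
  unfold fGamma
  split_ifs
  · exact_mod_cast hx.add_natCast 1
  · simpa only [neg_div, one_div] using hx.inv.neg
  · exact_mod_cast hx.sub_natCast 1

lemma irrational_iterate_fGamma {x : ℝ} (hx : Irrational x) (n : ℕ) :
    Irrational (fGamma^[n] x) :=
  Function.Iterate.rec Irrational hx (fun _ => irrational_fGamma) n

theorem stmt_7_general (x : ℝ) (n : ℕ)
    (hneg_two : fGamma^[n] x ≠ -2) (hone : fGamma^[n] x ≠ 1) :
    (itin x n = 2 → itin x (n + 1) = 0 → itin x (n + 2) = 4) ∧
      (itin x n = 4 → itin x (n + 1) = 0 → itin x (n + 2) = 2) := by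
  simp only [itin, Function.iterate_succ_apply', symb_eq_two_iff, symb_eq_zero_iff,
    symb_eq_four_iff]
  generalize fGamma^[n] x = y at hneg_two hone ⊢
  constructor
  · rintro hy ⟨hleft, -⟩
    rw [fGamma_of_le_neg_one hy.le] at hleft ⊢
    have hne : y + 1 ≠ -1 := fun h => hneg_two (by linarith)
    exact (one_lt_fGamma ⟨hleft.lt_of_ne' hne, by linarith⟩).le
  · rintro hy ⟨-, hright⟩
    rw [fGamma_of_one_le hy] at hright ⊢
    exact fGamma_lt_neg_one ⟨sub_pos.mpr (hy.lt_of_ne' hone), hright⟩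

theorem stmt_7 (x : ℝ) (hx : Irrational x) (n : ℕ) :
    (itin x n = 2 → itin x (n + 1) = 0 → itin x (n + 2) = 4) ∧
      (itin x n = 4 → itin x (n + 1) = 0 → itin x (n + 2) = 2) := by
  have hirr := irrational_iterate_fGamma hx n
  exact stmt_7_general x n (by exact_mod_cast hirr.ne_int (-2)) hirr.ne_one
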